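/- arXiv:math/0407426 — 6 statements merged into one kernel-verified Lean document; each statement's English description precedes it below -/
import Mathlib

section
/- Let K be a field equipped with a nonarchimedean absolute value |·| : K → ℝ≥0 (so |xy| = |x||y|, |x+y| ≤ max(|x|,|y|), and |x| = 0 iff x = 0), and let L be an algebraic closure of K. Let d ≥ 2 and let F₁, F₂ ∈ K[x,y] be homogeneous polynomials of degree d which, regarded as polynomials over L, have no common zero in L² other than (0,0). Set F = (F₁,F₂) : K² → K². Then there exist real constants 0 < C ≤ D such that C·‖z‖^d ≤ ‖F(z)‖ ≤ D·‖z‖^d for all z ∈ K². -/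
/-!
Every point of `K²` is `c • (1, t)` or `c • (t, 1)` with `|c| = ‖z‖` and `|t| ≤ 1`,
so by homogeneity both bounds reduce to bounds, uniform over `|t| ≤ 1`, for the two
dehomogenised pairs `(F₁(1, t), F₂(1, t))` and `(F₁(t, 1), F₂(t, 1))` of one-variable polynomials.
A polynomial is bounded on `|t| ≤ 1`, which gives the upper bounds. For the lower bounds, each pair
`(f, g)` has no common root in the algebraically closed field `L`, hence is coprime over `K`:
a Bézout relation `a f + b g = 1` with `|a|, |b| ≤ M` on `|t| ≤ 1` forces
`max |f| |g| ≥ 1 / (2 M)` there.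
-/

open MvPolynomial

/-- The sup "norm" on `K²` induced by an absolute value `v` on `K`. -/
def supNormV {K : Type*} [Field K] (v : AbsoluteValue K ℝ) (z : K × K) : ℝ :=
  max (v z.1) (v z.2)

/-- Evaluation of a two-variable polynomial at a point of `K²`. -/
noncomputable def evalAt {K : Type*} [CommRing K] (P : MvPolynomial (Fin 2) K)
    (z : K × K) : K :=
  MvPolynomial.eval ![z.1, z.2] P

/-- The map `F = (F₁,F₂) : K² → K²`. -/
noncomputable def Fmap {K : Type*} [CommRing K] (F₁ F₂ : MvPolynomial (Fin 2) K)
    (z : K × K) : K × K :=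
  (evalAt F₁ z, evalAt F₂ z)

/-- A polynomial is bounded on the closed unit disc of an absolute value. -/
theorem exists_bound_eval {K : Type*} [Field K] (v : AbsoluteValue K ℝ) (p : Polynomial K) :
    ∃ M : ℝ, 0 < M ∧ ∀ t : K, v t ≤ 1 → v (p.eval t) ≤ M := by
  induction p using Polynomial.induction_on' with
  | add p q hp hq =>
    obtain ⟨M, hM, hp⟩ := hp
    obtain ⟨N, hN, hq⟩ := hq
    refine ⟨M + N, by positivity, fun t ht => ?_⟩
    rw [Polynomial.eval_add]
    exact (v.add_le _ _).trans (add_le_add (hp t ht) (hq t ht))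
  | monomial n a =>
    refine ⟨v a + 1, by positivity, fun t ht => ?_⟩
    rw [Polynomial.eval_monomial, v.map_mul, v.map_pow]
    have h1 : v t ^ n ≤ 1 := pow_le_one₀ (v.nonneg t) ht
    nlinarith [v.nonneg a]

/-- Two polynomials over `K` without a common root in an algebraic closure are bounded, and
bounded away from zero simultaneously, on the closed unit disc. -/
theorem exists_bounds_of_no_common_root {K L : Type*} [Field K] [Field L] [Algebra K L]
    [IsAlgClosure K L] (v : AbsoluteValue K ℝ) (f g : Polynomial K)
    (h : ∀ s : L, Polynomial.aeval s f = 0 → Polynomial.aeval s g ≠ 0) :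
    ∃ C D : ℝ, 0 < C ∧ ∀ t : K, v t ≤ 1 →
      C ≤ max (v (f.eval t)) (v (g.eval t)) ∧ max (v (f.eval t)) (v (g.eval t)) ≤ D := by
  have : IsAlgClosed L := IsAlgClosure.isAlgClosed K
  have hc : IsCoprime f g := by
    rw [Polynomial.isCoprime_iff_aeval_ne_zero_of_isAlgClosed K L]
    intro s
    by_cases hs : Polynomial.aeval s f = 0
    · exact Or.inr (h s hs)
    · exact Or.inl hs
  obtain ⟨a, b, hab⟩ := hc
  obtain ⟨A, hA, ha⟩ := exists_bound_eval v a
  obtain ⟨B, hB, hb⟩ := exists_bound_eval v b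
  obtain ⟨M, -, hf⟩ := exists_bound_eval v f
  obtain ⟨N, -, hg⟩ := exists_bound_eval v g
  refine ⟨1 / (A + B), max M N, by positivity, fun t ht =>
    ⟨?_, max_le_max (hf t ht) (hg t ht)⟩⟩
  have h1 : a.eval t * f.eval t + b.eval t * g.eval t = 1 := by
    rw [← Polynomial.eval_mul, ← Polynomial.eval_mul, ← Polynomial.eval_add, hab,
      Polynomial.eval_one]
  have h2 := v.add_le (a.eval t * f.eval t) (b.eval t * g.eval t)
  rw [h1, v.map_one, v.map_mul, v.map_mul] at h2
  rw [div_le_iff₀ (by positivity)]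
  have h3 := mul_le_mul (ha t ht) (le_max_left (v (f.eval t)) (v (g.eval t))) (v.nonneg _) hA.le
  have h4 := mul_le_mul (hb t ht) (le_max_right (v (f.eval t)) (v (g.eval t))) (v.nonneg _) hB.le
  linarith

/-- Dehomogenisation at a pair of one-variable polynomials commutes with evaluation. -/
theorem aeval_aeval_pair {K L : Type*} [Field K] [Field L] [Algebra K L]
    (P : MvPolynomial (Fin 2) K) (p q : Polynomial K) (s : L) :
    Polynomial.aeval s (MvPolynomial.aeval ![p, q] P) =
      evalAt (MvPolynomial.map (algebraMap K L) P) (Polynomial.aeval s p, Polynomial.aeval s q) := by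
  rw [evalAt, MvPolynomial.eval_map, ← MvPolynomial.aeval_def, ← AlgHom.comp_apply,
    MvPolynomial.comp_aeval]
  congr 2
  funext i
  fin_cases i <;> rfl

theorem eval_aeval_pair {K : Type*} [Field K]
    (P : MvPolynomial (Fin 2) K) (p q : Polynomial K) (t : K) :
    (MvPolynomial.aeval ![p, q] P).eval t = evalAt P (p.eval t, q.eval t) := by
  simpa [MvPolynomial.map_id] using aeval_aeval_pair (L := K) P p q t

theorem evalAt_smul {K : Type*} [Field K] {d : ℕ} {P : MvPolynomial (Fin 2) K}
    (h : P.IsHomogeneous d) (c x y : K) :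
    evalAt P (c * x, c * y) = c ^ d * evalAt P (x, y) := by
  rw [evalAt, evalAt, MvPolynomial.eval_eq', MvPolynomial.eval_eq', Finset.mul_sum]
  refine Finset.sum_congr rfl fun m hm => ?_
  have hm' : m 0 + m 1 = d := by
    have := h (MvPolynomial.mem_support_iff.1 hm)
    simpa [Finsupp.weight_apply, Finsupp.sum_fintype] using this
  simp only [Fin.prod_univ_two, Matrix.cons_val_zero, Matrix.cons_val_one]
  rw [← hm']
  ring

theorem supNormV_Fmap_smul {K : Type*} [Field K] (v : AbsoluteValue K ℝ) {d : ℕ}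
    {F₁ F₂ : MvPolynomial (Fin 2) K} (h₁ : F₁.IsHomogeneous d) (h₂ : F₂.IsHomogeneous d)
    (c x y : K) :
    supNormV v (Fmap F₁ F₂ (c * x, c * y)) = v c ^ d * supNormV v (Fmap F₁ F₂ (x, y)) := by
  simp only [supNormV, Fmap, evalAt_smul h₁, evalAt_smul h₂, v.map_mul, v.map_pow]
  rw [mul_max_of_nonneg _ _ (pow_nonneg (v.nonneg c) d)]

/-- Let `K` be a field with a nonarchimedean absolute value `v`, `L` an algebraic
closure of `K`, and `F₁, F₂ ∈ K[x,y]` homogeneous of degree `d ≥ 2` with no common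
zero in `L²` other than the origin.  Then there are constants `0 < C ≤ D` with
`C‖z‖^d ≤ ‖F(z)‖ ≤ D‖z‖^d` for all `z ∈ K²`. -/
theorem bounds_for_homogeneous_lift_nonarch
    {K L : Type*} [Field K] [Field L] [Algebra K L] [IsAlgClosure K L]
    (v : AbsoluteValue K ℝ) (hna : ∀ x y : K, v (x + y) ≤ max (v x) (v y))
    (d : ℕ) (hd : 2 ≤ d) (F₁ F₂ : MvPolynomial (Fin 2) K)
    (h₁ : F₁.IsHomogeneous d) (h₂ : F₂.IsHomogeneous d)
    (hcommon : ∀ z : L × L,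
      evalAt (MvPolynomial.map (algebraMap K L) F₁) z = 0 →
      evalAt (MvPolynomial.map (algebraMap K L) F₂) z = 0 → z = 0) :
    ∃ C D : ℝ, 0 < C ∧ C ≤ D ∧ ∀ z : K × K,
      C * supNormV v z ^ d ≤ supNormV v (Fmap F₁ F₂ z) ∧
      supNormV v (Fmap F₁ F₂ z) ≤ D * supNormV v z ^ d := by
  -- The two affine charts of the projective line.
  obtain ⟨C, D, hC, hCD⟩ := exists_bounds_of_no_common_root (L := L) v
    (MvPolynomial.aeval ![1, Polynomial.X] F₁) (MvPolynomial.aeval ![1, Polynomial.X] F₂) (by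
      intro s hs₁ hs₂
      rw [aeval_aeval_pair] at hs₁ hs₂
      simpa using hcommon _ hs₁ hs₂)
  obtain ⟨C', D', hC', hCD'⟩ := exists_bounds_of_no_common_root (L := L) v
    (MvPolynomial.aeval ![Polynomial.X, 1] F₁) (MvPolynomial.aeval ![Polynomial.X, 1] F₂) (by
      intro s hs₁ hs₂
      rw [aeval_aeval_pair] at hs₁ hs₂
      simpa using hcommon _ hs₁ hs₂)
  simp only [eval_aeval_pair, Polynomial.eval_one, Polynomial.eval_X] at hCD hCD'
  have hCD0 : C ≤ D := (hCD 0 (by simp)).1.trans (hCD 0 (by simp)).2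
  refine ⟨min C C', max D D', lt_min hC hC',
    (min_le_left _ _).trans (hCD0.trans (le_max_left _ _)), ?_⟩
  rintro ⟨x, y⟩
  rcases le_total (v y) (v x) with hyx | hxy
  · have hn : supNormV v (x, y) = v x := max_eq_left hyx
    rw [hn]
    -- For `x = 0` also `y = 0`, and the junk value `y / 0 = 0` still gives `(x, y) = x • (1, y / x)`.
    have hy : x * (y / x) = y := by
      by_cases hx : x = 0
      · subst hx
        have : v y = 0 := le_antisymm (by simpa using hyx) (v.nonneg y)
        simp [v.eq_zero.1 this]
      · field_simp
    have ht : v (y / x) ≤ 1 := by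
      rw [map_div₀]
      exact div_le_one_of_le₀ hyx (v.nonneg x)
    have hF := supNormV_Fmap_smul v h₁ h₂ x 1 (y / x)
    rw [mul_one, hy] at hF
    rw [hF, mul_comm _ (v x ^ d), mul_comm _ (v x ^ d)]
    have hx0 := pow_nonneg (v.nonneg x) d
    exact ⟨mul_le_mul_of_nonneg_left ((min_le_left _ _).trans (hCD _ ht).1) hx0,
      mul_le_mul_of_nonneg_left ((hCD _ ht).2.trans (le_max_left _ _)) hx0⟩
  · have hn : supNormV v (x, y) = v y := max_eq_right hxy
    rw [hn]
    have hx : y * (x / y) = x := by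
      by_cases hy : y = 0
      · subst hy
        have : v x = 0 := le_antisymm (by simpa using hxy) (v.nonneg x)
        simp [v.eq_zero.1 this]
      · field_simp
    have ht : v (x / y) ≤ 1 := by
      rw [map_div₀]
      exact div_le_one_of_le₀ hxy (v.nonneg y)
    have hF := supNormV_Fmap_smul v h₁ h₂ y (x / y) 1
    rw [mul_one, hx] at hF
    rw [hF, mul_comm _ (v y ^ d), mul_comm _ (v y ^ d)]
    have hy0 := pow_nonneg (v.nonneg y) d
    exact ⟨mul_le_mul_of_nonneg_left ((min_le_right _ _).trans (hCD' _ ht).1) hy0,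
      mul_le_mul_of_nonneg_left ((hCD' _ ht).2.trans (le_max_right _ _)) hy0⟩
end

section
/- Let K be a field equipped with a nonarchimedean absolute value |·| : K → ℝ≥0 (so |xy| = |x||y|, |x+y| ≤ max(|x|,|y|), and |x| = 0 iff x = 0). Let d ≥ 2 and let F₁, F₂ ∈ K[x,y] be homogeneous polynomials of degree d, all of whose coefficients have absolute value ≤ 1. Suppose there exist homogeneous polynomials G₁, G₂, H₁, H₂ ∈ K[x,y] of degree d−1, all of whose coefficients have absolute value ≤ 1, and an element u ∈ K with |u| = 1, such that G₁F₁ + G₂F₂ = u·x^{2d−1} and H₁F₁ + H₂F₂ = u·y^{2d−1}. Setting F = (F₁,F₂) : K² → K², the following hold: (i) ‖F(z)‖ = ‖z‖^d for all z ∈ K²; (ii) the filled Julia set K_F equals the unit polydisk {z ∈ K² : ‖z‖ ≤ 1}; (iii) lim_{n→∞} d^{−n}·log‖F^{(n)}(z)‖ = log‖z‖ for every z ∈ K² ∖ {(0,0)}, where F^{(n)} is the n-fold iterate of F. -/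
/-!
The ultrametric inequality bounds the value at `z` of a form of degree `e` with coefficients in the
unit ball by `‖z‖ ^ e`. Applied to `F₁, F₂` this gives `‖F z‖ ≤ ‖z‖ ^ d`; applied to `Gᵢ, Hᵢ` in the Bézout
identities it gives `‖z‖ ^ (2d-1) ≤ ‖z‖ ^ (d-1) * ‖F z‖`, hence the reverse inequality
after cancelling `‖z‖ ^ (d-1)` when `z ≠ 0`. Iterating,
`‖F^[n] z‖ = ‖z‖ ^ (d ^ n)`, which is bounded in `n` exactly when `‖z‖ ≤ 1`, and which makes
`d ^ (-n) * log ‖F^[n] z‖` a constant sequence.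
-/

open MvPolynomial Filter

lemma supNormV_nonneg {K : Type*} [Field K] (v : AbsoluteValue K ℝ) (z : K × K) :
    0 ≤ supNormV v z :=
  (v.nonneg z.1).trans (le_max_left _ _)

lemma abv_sum_le {K ι : Type*} [Field K] (v : AbsoluteValue K ℝ)
    (hna : ∀ x y : K, v (x + y) ≤ max (v x) (v y)) (s : Finset ι) (f : ι → K) (B : ℝ)
    (hB : 0 ≤ B) (h : ∀ i ∈ s, v (f i) ≤ B) : v (∑ i ∈ s, f i) ≤ B := by
  classical
  exact Finset.sum_induction f (fun x => v x ≤ B)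
    (fun a b ha hb => (hna a b).trans (max_le ha hb)) (by simpa using hB) h

lemma abv_evalAt_le {K : Type*} [Field K] (v : AbsoluteValue K ℝ)
    (hna : ∀ x y : K, v (x + y) ≤ max (v x) (v y)) {e : ℕ} {P : MvPolynomial (Fin 2) K}
    (hP : P.IsHomogeneous e) (hc : ∀ m, v (MvPolynomial.coeff m P) ≤ 1) (z : K × K) :
    v (evalAt P z) ≤ supNormV v z ^ e := by
  have hN := supNormV_nonneg v z
  rw [evalAt, MvPolynomial.eval_eq']
  refine abv_sum_le v hna _ _ _ (pow_nonneg hN e) fun m hm => ?_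
  have hdeg : m 0 + m 1 = e := by
    have h := hP (MvPolynomial.mem_support_iff.mp hm)
    simpa [Finsupp.weight_apply, Finsupp.sum_fintype] using h
  simp only [Fin.prod_univ_two, Matrix.cons_val_zero, Matrix.cons_val_one, map_mul, map_pow]
  calc v (coeff m P) * (v z.1 ^ m 0 * v z.2 ^ m 1)
      ≤ 1 * (supNormV v z ^ m 0 * supNormV v z ^ m 1) := by
        have h1 : v z.1 ≤ supNormV v z := le_max_left _ _
        have h2 : v z.2 ≤ supNormV v z := le_max_right _ _
        have := hc m
        gcongr
    _ = supNormV v z ^ e := by rw [one_mul, ← pow_add, hdeg]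

/-- A Bézout identity with coefficients in the unit ball bounds the chosen coordinate of `z` from above
in terms of the size of the image of `z`. -/
lemma coord_pow_le {K : Type*} [Field K] (v : AbsoluteValue K ℝ)
    (hna : ∀ x y : K, v (x + y) ≤ max (v x) (v y)) {e k : ℕ}
    {F₁ F₂ G₁ G₂ : MvPolynomial (Fin 2) K}
    (hG₁ : G₁.IsHomogeneous e) (hG₂ : G₂.IsHomogeneous e)
    (hcG₁ : ∀ m, v (MvPolynomial.coeff m G₁) ≤ 1)
    (hcG₂ : ∀ m, v (MvPolynomial.coeff m G₂) ≤ 1)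
    {u : K} (hu : v u = 1) (i : Fin 2)
    (hid : G₁ * F₁ + G₂ * F₂ = MvPolynomial.C u * (MvPolynomial.X i) ^ k) (z : K × K) :
    v (![z.1, z.2] i) ^ k ≤ supNormV v z ^ e * supNormV v (Fmap F₁ F₂ z) := by
  have hN := pow_nonneg (supNormV_nonneg v z) e
  have h := congrArg (fun P => v (MvPolynomial.eval ![z.1, z.2] P)) hid
  simp only [map_add, map_mul, map_pow, MvPolynomial.eval_C, MvPolynomial.eval_X, hu,
    one_mul] at h
  rw [← h]
  refine (hna _ _).trans (max_le ?_ ?_) <;> rw [map_mul]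
  · exact mul_le_mul (abv_evalAt_le v hna hG₁ hcG₁ z) (le_max_left _ _) (v.nonneg _) hN
  · exact mul_le_mul (abv_evalAt_le v hna hG₂ hcG₂ z) (le_max_right _ _) (v.nonneg _) hN

/-- Over a nonarchimedean field, if `F₁, F₂` have coefficients of absolute value `≤ 1`
and a Bézout identity `G₁F₁ + G₂F₂ = u·x^{2d-1}`, `H₁F₁ + H₂F₂ = u·y^{2d-1}` holds with
`|u| = 1` and the `Gᵢ, Hᵢ` of degree `d-1` with coefficients of absolute value `≤ 1`,
then `‖F(z)‖ = ‖z‖^d` everywhere, the filled Julia set of `F` is the unit polydisk,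
and `lim_n d^{-n} log ‖F^{(n)}(z)‖ = log ‖z‖` for nonzero `z`. -/
theorem good_reduction_filled_julia
    {K : Type*} [Field K] (v : AbsoluteValue K ℝ)
    (hna : ∀ x y : K, v (x + y) ≤ max (v x) (v y))
    (d : ℕ) (hd : 2 ≤ d) (F₁ F₂ : MvPolynomial (Fin 2) K)
    (hF₁ : F₁.IsHomogeneous d) (hF₂ : F₂.IsHomogeneous d)
    (hcF₁ : ∀ m, v (MvPolynomial.coeff m F₁) ≤ 1)
    (hcF₂ : ∀ m, v (MvPolynomial.coeff m F₂) ≤ 1)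
    (G₁ G₂ H₁ H₂ : MvPolynomial (Fin 2) K)
    (hG₁ : G₁.IsHomogeneous (d - 1)) (hG₂ : G₂.IsHomogeneous (d - 1))
    (hH₁ : H₁.IsHomogeneous (d - 1)) (hH₂ : H₂.IsHomogeneous (d - 1))
    (hcG₁ : ∀ m, v (MvPolynomial.coeff m G₁) ≤ 1)
    (hcG₂ : ∀ m, v (MvPolynomial.coeff m G₂) ≤ 1)
    (hcH₁ : ∀ m, v (MvPolynomial.coeff m H₁) ≤ 1)
    (hcH₂ : ∀ m, v (MvPolynomial.coeff m H₂) ≤ 1)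
    (u : K) (hu : v u = 1)
    (hid1 : G₁ * F₁ + G₂ * F₂ = MvPolynomial.C u * (MvPolynomial.X 0) ^ (2 * d - 1))
    (hid2 : H₁ * F₁ + H₂ * F₂ = MvPolynomial.C u * (MvPolynomial.X 1) ^ (2 * d - 1)) :
    (∀ z : K × K, supNormV v (Fmap F₁ F₂ z) = supNormV v z ^ d) ∧
    {z : K × K | ∃ M : ℝ, ∀ n : ℕ, 1 ≤ n → supNormV v ((Fmap F₁ F₂)^[n] z) ≤ M} =
      {z : K × K | supNormV v z ≤ 1} ∧
    (∀ z : K × K, z ≠ 0 →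
      Tendsto (fun n : ℕ => (1 / (d : ℝ) ^ n) * Real.log (supNormV v ((Fmap F₁ F₂)^[n] z)))
        atTop (nhds (Real.log (supNormV v z)))) := by
  have hnorm : ∀ z : K × K, supNormV v (Fmap F₁ F₂ z) = supNormV v z ^ d := by
    intro z
    have hN := supNormV_nonneg v z
    have hle : supNormV v (Fmap F₁ F₂ z) ≤ supNormV v z ^ d :=
      max_le (abv_evalAt_le v hna hF₁ hcF₁ z) (abv_evalAt_le v hna hF₂ hcF₂ z)
    refine le_antisymm hle ?_
    rcases hN.eq_or_lt with h0 | hpos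
    · rw [← h0, zero_pow (by omega)]
      exact supNormV_nonneg v _
    · have hx := coord_pow_le v hna hG₁ hG₂ hcG₁ hcG₂ hu 0 hid1 z
      have hy := coord_pow_le v hna hH₁ hH₂ hcH₁ hcH₂ hu 1 hid2 z
      simp only [Matrix.cons_val_zero, Matrix.cons_val_one] at hx hy
      have hmax : supNormV v z ^ (2 * d - 1) ≤
          supNormV v z ^ (d - 1) * supNormV v (Fmap F₁ F₂ z) := by
        rcases max_choice (v z.1) (v z.2) with h | h
        · calc supNormV v z ^ (2 * d - 1) = v z.1 ^ (2 * d - 1) := by rw [supNormV, h]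
            _ ≤ _ := hx
        · calc supNormV v z ^ (2 * d - 1) = v z.2 ^ (2 * d - 1) := by rw [supNormV, h]
            _ ≤ _ := hy
      rw [show 2 * d - 1 = (d - 1) + d by omega, pow_add] at hmax
      exact le_of_mul_le_mul_left hmax (pow_pos hpos _)
  have hiter : ∀ (n : ℕ) (z : K × K),
      supNormV v ((Fmap F₁ F₂)^[n] z) = supNormV v z ^ (d ^ n) := by
    intro n z
    induction n with
    | zero => simp
    | succ n ih => rw [Function.iterate_succ_apply', hnorm, ih, ← pow_mul, ← pow_succ]
  refine ⟨hnorm, ?_, fun z _ => ?_⟩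
  · ext z
    simp only [Set.mem_ofPred_eq, hiter]
    constructor
    · rintro ⟨M, hM⟩
      by_contra! hgt
      obtain ⟨n, hn⟩ := pow_unbounded_of_one_lt M hgt
      have h1 := hM (n + 1) (by omega)
      have h2 : n ≤ d ^ (n + 1) :=
        (Nat.le_succ n).trans (Nat.lt_pow_self (by omega)).le
      have h3 := pow_le_pow_right₀ hgt.le h2
      linarith
    · exact fun h => ⟨1, fun n _ => pow_le_one₀ (supNormV_nonneg v z) h⟩
  · refine tendsto_const_nhds.congr fun n => ?_
    have hd0 : (d : ℝ) ^ n ≠ 0 := pow_ne_zero _ (by positivity)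
    rw [hiter, Real.log_pow]
    push_cast
    field_simp
end

section
/- Let X be a nonempty compact metrizable topological space, and let g : X × X → ℝ ∪ {+∞} be lower semicontinuous and bounded below. Let (S_n)_{n≥1} be a sequence of nonempty finite subsets of X with #S_n → ∞, and for each n let δ_n := (1/#S_n)·∑_{z ∈ S_n} δ_z be the uniform probability measure on S_n. Suppose δ_n converges weakly to a Borel probability measure ν on X. Then liminf_{n→∞} ∬_{(X×X)∖Δ} g(z,w) dδ_n(z) dδ_n(w) ≥ ∬_{X×X} g(z,w) dν(z) dν(w), where Δ ⊆ X × X is the diagonal and the integrals are taken in (−∞, +∞] (they are well-defined since g is bounded below). -/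
/-!
Adding a constant to `g` reduces everything to a nonnegative lower semicontinuous integrand `h`.
Weak convergence passes to product measures on a second countable metrizable space, and the
diagonal has `δₙ ⊗ δₙ`-mass `1 / #Sₙ → 0`. Hence the off-diagonal restrictions of `δₙ ⊗ δₙ` still
satisfy the portmanteau inequality `(ν ⊗ ν)(G) ≤ liminf (δₙ ⊗ δₙ)(G ∖ Δ)` on open sets `G`
(`le_liminf_offDiag_open`). The layer-cake formula and Fatou's lemma turn this into the inequality
for integrals of lower semicontinuous functions (`lintegral_le_liminf_of_lsc`). The added constant
is harmless in the limit because the off-diagonal restrictions have total mass at most `1`.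
-/

open Filter MeasureTheory
open scoped ENNReal

/-- The "positive part" of an extended real, as an element of `ℝ≥0∞`. -/
noncomputable def EReal.toENNReal' (x : EReal) : ℝ≥0∞ :=
  if x = ⊤ then ⊤ else ENNReal.ofReal x.toReal

/-- The integral of a function with values in `ℝ ∪ {±∞}` with respect to a measure,
with values in the extended reals: the difference of the lower integrals of the
positive and negative parts.  For a function bounded below and a finite measure
this is well-defined with values in `(-∞, +∞]`. -/
noncomputable def eInt {α : Type*} [MeasurableSpace α] (μ : Measure α)
    (g : α → EReal) : EReal :=
  ((∫⁻ x, (g x).toENNReal' ∂μ : ℝ≥0∞) : EReal) -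
    ((∫⁻ x, (-(g x)).toENNReal' ∂μ : ℝ≥0∞) : EReal)

/-- The uniform probability measure on a finite set `S`. -/
noncomputable def unifMeasure {X : Type*} [MeasurableSpace X] (S : Finset X) :
    Measure X :=
  ((S.card : ℝ≥0∞))⁻¹ • ∑ z ∈ S, Measure.dirac z

lemma unifMeasure_isProbabilityMeasure_of_nonempty {X : Type*} [MeasurableSpace X]
    (S : Finset X) (hS : S.Nonempty) : IsProbabilityMeasure (unifMeasure S) := by
  constructor
  simp only [unifMeasure, Measure.smul_apply, Measure.finsetSum_apply, measure_univ, smul_eq_mul,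
    Finset.sum_const, nsmul_eq_mul, mul_one]
  exact ENNReal.inv_mul_cancel (by simpa using hS.ne_empty) (by simp)

lemma unifMeasure_singleton_le {X : Type*} [MeasurableSpace X] [MeasurableSingletonClass X]
    (S : Finset X) (x : X) : unifMeasure S {x} ≤ ((S.card : ℝ≥0∞))⁻¹ := by
  classical
  simp only [unifMeasure, Measure.smul_apply, Measure.finsetSum_apply, smul_eq_mul]
  refine (mul_le_mul_right (b := ∑ z ∈ S, Measure.dirac z {x}) (c := 1) ?_ _).trans (by simp)
  simp only [Measure.dirac_apply, Set.indicator_apply, Set.mem_singleton_iff, Pi.one_apply,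
    Finset.sum_ite_eq']
  split_ifs <;> simp

lemma prod_unifMeasure_diagonal_le {X : Type*} [TopologicalSpace X] [SecondCountableTopology X]
    [T2Space X] [MeasurableSpace X] [BorelSpace X] (S : Finset X) (hS : S.Nonempty) :
    ((unifMeasure S).prod (unifMeasure S)) {p : X × X | p.1 = p.2} ≤ ((S.card : ℝ≥0∞))⁻¹ := by
  have := unifMeasure_isProbabilityMeasure_of_nonempty S hS
  have hm : MeasurableSet {p : X × X | p.1 = p.2} :=
    (isClosed_eq continuous_fst continuous_snd).measurableSet
  rw [Measure.prod_apply hm]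
  calc ∫⁻ x, unifMeasure S (Prod.mk x ⁻¹' {p : X × X | p.1 = p.2}) ∂(unifMeasure S)
      ≤ ∫⁻ _, ((S.card : ℝ≥0∞))⁻¹ ∂(unifMeasure S) := by
        refine lintegral_mono fun x => ?_
        have : Prod.mk x ⁻¹' {p : X × X | p.1 = p.2} = {x} := by
          ext y; simp [eq_comm]
        rw [this]
        exact unifMeasure_singleton_le S x
    _ = _ := by simp

/-- The portmanteau inequality on open sets survives removing the diagonal. -/
lemma le_liminf_offDiag_open
    {X : Type*} [TopologicalSpace X] [CompactSpace X]
    [TopologicalSpace.MetrizableSpace X] [SecondCountableTopology X]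
    [MeasurableSpace X] [BorelSpace X]
    (S : ℕ → Finset X) (hSne : ∀ n, (S n).Nonempty)
    (hcard : Tendsto (fun n => (S n).card) atTop atTop)
    (ν : Measure X) (hν : IsProbabilityMeasure ν)
    (hweak : ∀ f : C(X, ℝ),
      Tendsto (fun n => ∫ x, f x ∂(unifMeasure (S n))) atTop (nhds (∫ x, f x ∂ν)))
    (G : Set (X × X)) (hG : IsOpen G) :
    ν.prod ν G ≤ liminf (fun n => (((unifMeasure (S n)).prod (unifMeasure (S n))).restrict
          {p : X × X | p.1 ≠ p.2}) G) atTop := by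
  have hp := fun n => unifMeasure_isProbabilityMeasure_of_nonempty (S n) (hSne n)
  let _ := TopologicalSpace.metrizableSpaceMetric X
  let P : ℕ → ProbabilityMeasure X := fun n => ⟨unifMeasure (S n), hp n⟩
  let Q : ProbabilityMeasure X := ⟨ν, hν⟩
  have hPQ : Tendsto P atTop (nhds Q) :=
    ProbabilityMeasure.tendsto_iff_forall_integral_tendsto.2 fun f => hweak f.toContinuousMap
  have hprod : Tendsto (fun n => (P n).prod (P n)) atTop (nhds (Q.prod Q)) :=
    (ProbabilityMeasure.continuous_prod.tendsto (Q, Q)).comp (hPQ.prodMk_nhds hPQ)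
  have hz : Tendsto (fun n => (((S n).card : ℝ≥0∞))⁻¹) atTop (nhds 0) :=
    ENNReal.tendsto_inv_nat_nhds_zero.comp hcard
  refine (ProbabilityMeasure.le_liminf_measure_open_of_tendsto hprod hG).trans ?_
  refine le_trans ?_ (ENNReal.liminf_add_of_right_tendsto_zero hz _).le
  refine liminf_le_liminf (Eventually.of_forall fun n => ?_)
  have hm : MeasurableSet {p : X × X | p.1 ≠ p.2} :=
    (isOpen_ne_fun continuous_fst continuous_snd).measurableSet
  change ((unifMeasure (S n)).prod (unifMeasure (S n))) G ≤ _
  simp only [Pi.add_apply]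
  rw [Measure.restrict_apply' hm]
  calc _ ≤ ((unifMeasure (S n)).prod (unifMeasure (S n)))
        ((G ∩ {p : X × X | p.1 ≠ p.2}) ∪ {p : X × X | p.1 = p.2}) := by
        refine measure_mono fun p hpG => ?_
        by_cases h : p.1 = p.2
        · exact Or.inr h
        · exact Or.inl ⟨hpG, h⟩
    _ ≤ _ := (measure_union_le _ _).trans
        (add_le_add le_rfl (prod_unifMeasure_diagonal_le _ (hSne n)))

/-- The lower semicontinuous half of the portmanteau theorem, for `ℝ≥0∞`-valued functions and
arbitrary measures. -/
lemma lintegral_le_liminf_of_lsc {Ω : Type*} [MeasurableSpace Ω] [TopologicalSpace Ω]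
    [OpensMeasurableSpace Ω] {μ : Measure Ω} {μs : ℕ → Measure Ω} {h : Ω → ℝ≥0∞}
    (hl : LowerSemicontinuous h)
    (hopen : ∀ G, IsOpen G → μ G ≤ liminf (fun i => μs i G) atTop) :
    ∫⁻ x, h x ∂μ ≤ liminf (fun i => ∫⁻ x, h x ∂(μs i)) atTop := by
  have hmeas : Measurable h := hl.measurable
  -- The layer-cake formula is stated for real-valued functions, so `h` is truncated at height `k`.
  have hk : ∀ k : ℕ, ∫⁻ x, min (h x) k ∂μ ≤ liminf (fun i => ∫⁻ x, h x ∂(μs i)) atTop := by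
    intro k
    have hfin : ∀ x, min (h x) (k : ℝ≥0∞) ≠ ⊤ := fun x =>
      (lt_of_le_of_lt (min_le_right _ _) (ENNReal.natCast_lt_top k)).ne
    have hcake : ∀ ρ : Measure Ω, ∫⁻ x, min (h x) k ∂ρ
        = ∫⁻ t in Set.Ioi (0 : ℝ), ρ {a | t < (min (h a) (k : ℝ≥0∞)).toReal} := by
      intro ρ
      rw [← lintegral_eq_lintegral_meas_lt ρ (Eventually.of_forall fun _ => ENNReal.toReal_nonneg)
        (hmeas.min measurable_const).ennreal_toReal.aemeasurable]
      exact lintegral_congr fun x => (ENNReal.ofReal_toReal (hfin x)).symm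
    have hset : ∀ t : ℝ, 0 < t → IsOpen {a | t < (min (h a) (k : ℝ≥0∞)).toReal} := by
      intro t ht
      have : {a | t < (min (h a) (k : ℝ≥0∞)).toReal}
          = h ⁻¹' Set.Ioi (ENNReal.ofReal t) ∩ {_a | ENNReal.ofReal t < k} := by
        ext a
        simp only [Set.mem_ofPred_eq, Set.mem_inter_iff, Set.mem_preimage, Set.mem_Ioi]
        rw [← ENNReal.ofReal_lt_iff_lt_toReal ht.le (hfin a), lt_min_iff]
      rw [this]
      exact (hl.isOpen_preimage _).inter isOpen_const
    calc ∫⁻ x, min (h x) k ∂μ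
        ≤ ∫⁻ t in Set.Ioi (0 : ℝ),
            liminf (fun i => μs i {a | t < (min (h a) (k : ℝ≥0∞)).toReal}) atTop := by
          rw [hcake]
          exact setLIntegral_mono' measurableSet_Ioi fun t ht => hopen _ (hset t ht)
      _ ≤ liminf (fun i => ∫⁻ t in Set.Ioi (0 : ℝ),
            μs i {a | t < (min (h a) (k : ℝ≥0∞)).toReal}) atTop :=
          lintegral_liminf_le fun n => Antitone.measurable fun s t hst =>
            measure_mono fun ω hω => lt_of_le_of_lt hst hω
      _ ≤ _ := by
          refine liminf_le_liminf (Eventually.of_forall fun i => ?_)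
          rw [← hcake]
          exact lintegral_mono fun x => min_le_left _ _
  have hsup : ∀ x, h x = ⨆ k : ℕ, min (h x) (k : ℝ≥0∞) := by
    intro x
    have := inf_iSup_eq (h x) (fun k : ℕ => (k : ℝ≥0∞))
    rw [ENNReal.iSup_natCast, inf_top_eq] at this
    exact this
  calc ∫⁻ x, h x ∂μ = ∫⁻ x, ⨆ k : ℕ, min (h x) (k : ℝ≥0∞) ∂μ := lintegral_congr hsup
    _ = ⨆ k : ℕ, ∫⁻ x, min (h x) (k : ℝ≥0∞) ∂μ :=
        lintegral_iSup (fun k => hmeas.min measurable_const)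
          fun i j hij x => min_le_min le_rfl (by exact_mod_cast hij)
    _ ≤ _ := iSup_le hk

lemma toENNReal_add_ofReal_eq {x : EReal} {N : ℝ} (hN : 0 ≤ N) (hx : ((-N : ℝ) : EReal) ≤ x) :
    x.toENNReal + ENNReal.ofReal N = (x + (N : EReal)).toENNReal + (-x).toENNReal := by
  induction x with
  | bot => exact absurd (le_bot_iff.1 hx) (EReal.coe_ne_bot _)
  | top => simp
  | coe r =>
    have hr : -N ≤ r := EReal.coe_le_coe_iff.1 hx
    rw [← EReal.coe_add, ← EReal.coe_neg]
    simp only [EReal.real_coe_toENNReal]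
    rcases le_total 0 r with h | h
    · rw [ENNReal.ofReal_of_nonpos (p := -r) (by linarith), ENNReal.ofReal_add h hN, add_zero]
    · rw [ENNReal.ofReal_of_nonpos h, ← ENNReal.ofReal_add (by linarith) (by linarith)]
      rw [zero_add]
      congr 1; ring

/-- The extended-real integral of `g ≥ -N` in terms of the nonnegative function `g + N`. -/
lemma eInt_eq_sub {α : Type*} [MeasurableSpace α] (μ : Measure α) [IsFiniteMeasure μ]
    {g : α → EReal} (hg : Measurable g) {N : ℝ} (hN : 0 ≤ N)
    (hgN : ∀ x, ((-N : ℝ) : EReal) ≤ g x) :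
    eInt μ g = ((∫⁻ x, (g x + (N : EReal)).toENNReal ∂μ : ℝ≥0∞) : EReal)
      - ((ENNReal.ofReal N * μ Set.univ : ℝ≥0∞) : EReal) := by
  change ((∫⁻ x, (g x).toENNReal ∂μ : ℝ≥0∞) : EReal) -
    ((∫⁻ x, (-(g x)).toENNReal ∂μ : ℝ≥0∞) : EReal) = _
  have hneg : Measurable fun x => (-(g x)).toENNReal :=
    EReal.continuous_toENNReal.measurable.comp (continuous_neg.measurable.comp hg)
  have hsum : (∫⁻ x, (g x).toENNReal ∂μ) + ENNReal.ofReal N * μ Set.univ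
      = (∫⁻ x, (g x + (N : EReal)).toENNReal ∂μ) + ∫⁻ x, (-(g x)).toENNReal ∂μ := by
    rw [← lintegral_add_right _ hneg, ← lintegral_const, ← lintegral_add_right _ measurable_const]
    exact lintegral_congr fun x => toENNReal_add_ofReal_eq hN (hgN x)
  have hc : ENNReal.ofReal N * μ Set.univ ≠ ⊤ :=
    ENNReal.mul_ne_top ENNReal.ofReal_ne_top (measure_ne_top _ _)
  have hb : ∫⁻ x, (-(g x)).toENNReal ∂μ ≠ ⊤ := by
    refine ne_top_of_le_ne_top hc ?_
    rw [← lintegral_const]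
    refine lintegral_mono fun x => ?_
    rw [← EReal.real_coe_toENNReal]
    refine EReal.toENNReal_le_toENNReal ?_
    rw [EReal.neg_le, ← EReal.coe_neg]
    exact hgN x
  generalize (∫⁻ x, (g x).toENNReal ∂μ) = a at *
  generalize (∫⁻ x, (-(g x)).toENNReal ∂μ) = b at *
  generalize (∫⁻ x, (g x + (N : EReal)).toENNReal ∂μ) = d at *
  generalize ENNReal.ofReal N * μ Set.univ = c at *
  lift b to NNReal using hb
  lift c to NNReal using hc
  induction a with
  | top =>
    induction d with
    | top => rfl
    | coe d => exact absurd hsum (by simp [← ENNReal.coe_add])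
  | coe a =>
    induction d with
    | top => exact absurd hsum (by simp [← ENNReal.coe_add])
    | coe d =>
      have h1 : (a : ℝ) + c = d + b := by exact_mod_cast hsum
      change ((a : ℝ) : EReal) - ((b : ℝ) : EReal) = ((d : ℝ) : EReal) - ((c : ℝ) : EReal)
      rw [← EReal.coe_sub, ← EReal.coe_sub]
      congr 1; linarith

/-- If `g : X × X → ℝ ∪ {+∞}` is lower semicontinuous and bounded below on a compact
metrizable space, `δₙ` are uniform probability measures on finite sets `Sₙ` with
`#Sₙ → ∞` converging weakly to a probability measure `ν`, then
`liminf_n ∬_{(X×X)∖Δ} g dδₙ dδₙ ≥ ∬ g dν dν` in the extended reals. -/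
theorem liminf_offDiag_energy_ge
    {X : Type*} [TopologicalSpace X] [CompactSpace X]
    [TopologicalSpace.MetrizableSpace X] [Nonempty X]
    [MeasurableSpace X] [BorelSpace X]
    (g : X × X → EReal) (hlsc : LowerSemicontinuous g)
    (M : ℝ) (hM : ∀ p : X × X, (M : EReal) ≤ g p)
    (S : ℕ → Finset X) (hSne : ∀ n, (S n).Nonempty)
    (hcard : Tendsto (fun n => (S n).card) atTop atTop)
    (ν : Measure X) (hν : IsProbabilityMeasure ν)
    (hweak : ∀ f : C(X, ℝ),
      Tendsto (fun n => ∫ x, f x ∂(unifMeasure (S n))) atTop (nhds (∫ x, f x ∂ν))) :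
    eInt (ν.prod ν) g ≤
      liminf (fun n =>
        eInt (((unifMeasure (S n)).prod (unifMeasure (S n))).restrict
          {p : X × X | p.1 ≠ p.2}) g) atTop := by
  let _ := TopologicalSpace.metrizableSpaceMetric X
  have : SecondCountableTopology X := inferInstance
  have hp := fun n => unifMeasure_isProbabilityMeasure_of_nonempty (S n) (hSne n)
  have hgm : Measurable g := hlsc.measurable
  obtain ⟨N, hN, hgN⟩ : ∃ N : ℝ, 0 ≤ N ∧ ∀ p, ((-N : ℝ) : EReal) ≤ g p :=
    ⟨|M|, abs_nonneg M, fun p => (EReal.coe_le_coe_iff.2 (neg_abs_le M)).trans (hM p)⟩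
  have hcont : Continuous fun x : EReal => (x + (N : EReal)).toENNReal :=
    EReal.continuous_toENNReal.comp (continuous_iff_continuousAt.2 fun x =>
      ContinuousAt.comp (f := fun y : EReal => (y, (N : EReal))) (g := fun p => p.1 + p.2)
        (EReal.continuousAt_add (p := (x, (N : EReal))) (by simp) (by simp))
        (continuousAt_id.prodMk continuousAt_const))
  have hmono : Monotone fun x : EReal => (x + (N : EReal)).toENNReal := fun x y hxy =>
    EReal.toENNReal_le_toENNReal (add_le_add hxy le_rfl)
  have key := lintegral_le_liminf_of_lsc (hcont.comp_lowerSemicontinuous hlsc hmono)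
    (le_liminf_offDiag_open S hSne hcard ν hν hweak)
  rw [eInt_eq_sub _ hgm hN hgN, measure_univ, mul_one]
  set a : ℕ → ℝ≥0∞ := fun n => ∫⁻ p, (g p + (N : EReal)).toENNReal
    ∂(((unifMeasure (S n)).prod (unifMeasure (S n))).restrict {p : X × X | p.1 ≠ p.2}) with ha
  have hle : ∀ n, ((a n : ℝ≥0∞) : EReal) + (-((ENNReal.ofReal N : ℝ≥0∞) : EReal)) ≤
      eInt (((unifMeasure (S n)).prod (unifMeasure (S n))).restrict
          {p : X × X | p.1 ≠ p.2}) g := by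
    intro n
    rw [eInt_eq_sub _ hgm hN hgN, ← sub_eq_add_neg]
    refine EReal.sub_le_sub le_rfl (EReal.coe_ennreal_le_coe_ennreal_iff.2 ?_)
    refine (mul_le_mul_right ?_ _).trans (mul_one _).le
    exact (Measure.restrict_apply_le _ _).trans prob_le_one
  have hcoe : ((liminf a atTop : ℝ≥0∞) : EReal) = liminf (fun n => ((a n : ℝ≥0∞) : EReal)) atTop :=
    EReal.coe_ennreal_strictMono.monotone.map_liminf_of_continuousAt a continuous_coe_ennreal_ereal.continuousAt
  calc _ ≤ ((liminf a atTop : ℝ≥0∞) : EReal) - ((ENNReal.ofReal N : ℝ≥0∞) : EReal) :=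
        EReal.sub_le_sub (EReal.coe_ennreal_le_coe_ennreal_iff.2 key) le_rfl
    _ = liminf (fun n => ((a n : ℝ≥0∞) : EReal)) atTop
          + liminf (fun _ : ℕ => -((ENNReal.ofReal N : ℝ≥0∞) : EReal)) atTop := by
        rw [hcoe, liminf_const, sub_eq_add_neg]
    _ ≤ _ := EReal.le_liminf_add
    _ ≤ _ := liminf_le_liminf (Eventually.of_forall hle)
end

section
/- Let (a_n^{(j)})_{n,j ∈ ℕ} be a doubly-indexed sequence of real numbers such that: (F1) for each n, the series ∑_{j=0}^∞ a_n^{(j)} converges; and (F2) there exist nonnegative reals M_j, all but finitely many equal to zero, with a_n^{(j)} ≥ −M_j for all n and j. Let L ∈ ℝ. Then: (A) if limsup_{n→∞} ∑_j a_n^{(j)} ≤ L and ∑_{j=0}^∞ (liminf_{n→∞} a_n^{(j)}) ≥ L (the sum taken in (−∞,+∞], which is well-defined since liminf_n a_n^{(j)} ≥ −M_j), then lim_{n→∞} a_n^{(j)} exists for every j; (B) if limsup_{n→∞} ∑_j a_n^{(j)} ≤ L and there are real numbers L_j with ∑_{j=0}^∞ L_j convergent with sum ≥ L and with liminf_{n→∞}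 a_n^{(j)} ≥ L_j for every j, then lim_{n→∞} a_n^{(j)} = L_j for every j. -/
/-!
This is Fatou's lemma for series, together with the equality case. Beyond the finitely many indices
with `M j ≠ 0` all terms are nonnegative, so long partial sums of `∑_j a n j` are at most `s n`
(`exists_partial_sum_le`). If `c j ≤ liminf_n a n j` and `∑_j c j ≥ L ≥ limsup_n s n`, then in a long
partial sum every term is eventually almost at least `c j`, while the whole sum is eventually almost
at most `∑_j c j`; there is no room left for any single term to exceed `c j` noticeably, so
`a n j → c j` (`tendsto_of_squeeze`). Part (B) is the case `c = L'`. For part (A), each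
`liminf_n a n j` is finite, since the other terms of a long partial sum are bounded below and `s n`
is eventually bounded above, and `c j` is taken to be this liminf.
-/

open Filter

/-- If almost all terms are nonnegative, uniformly in `n`, then every partial sum that is long enough
(uniformly in `n`) is at most the full sum. -/
lemma exists_partial_sum_le (a : ℕ → ℕ → ℝ) (s : ℕ → ℝ)
    (h1 : ∀ n, Tendsto (fun N => ∑ j ∈ Finset.range N, a n j) atTop (nhds (s n)))
    (M : ℕ → ℝ) (hMfin : {j : ℕ | M j ≠ 0}.Finite) (hbd : ∀ n j, -M j ≤ a n j) :
    ∃ N₀, ∀ N, N₀ ≤ N → ∀ n, ∑ j ∈ Finset.range N, a n j ≤ s n := by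
  obtain ⟨B, hB⟩ := hMfin.bddAbove
  refine ⟨B + 1, fun N hN n => ge_of_tendsto (h1 n) ?_⟩
  filter_upwards [eventually_ge_atTop N] with K hK
  refine Finset.sum_le_sum_of_subset_of_nonneg (Finset.range_mono hK) fun j _ hj => ?_
  have hjN : N ≤ j := by simpa using hj
  have hMj : M j = 0 := by
    by_contra h
    have := hB (show j ∈ {j : ℕ | M j ≠ 0} from h)
    omega
  simpa [hMj] using hbd n j

/-- The equality case of Fatou's lemma, with the conditions on `liminf` and `limsup` spelled out as
eventual inequalities between reals. -/
lemma tendsto_of_squeeze (a : ℕ → ℕ → ℝ) (s : ℕ → ℝ) (L : ℝ) (c : ℕ → ℝ)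
    (hpart : ∃ N₀, ∀ N, N₀ ≤ N → ∀ n, ∑ j ∈ Finset.range N, a n j ≤ s n)
    (hs : ∀ ε > 0, ∀ᶠ n in atTop, s n < L + ε)
    (hlow : ∀ j, ∀ x < c j, ∀ᶠ n in atTop, x < a n j)
    (hc : ∀ ε > 0, ∀ᶠ N in atTop, L - ε < ∑ j ∈ Finset.range N, c j) (k : ℕ) :
    Tendsto (fun n => a n k) atTop (nhds (c k)) := by
  refine tendsto_order.2 ⟨hlow k, fun y hy => ?_⟩
  -- The excess `y - c k` is split in three: for `s n`, for the tail of `∑ c j`, and for the terms.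
  set ε := (y - c k) / 3 with hε
  have hεpos : 0 < ε := by linarith
  obtain ⟨N₀, hN₀⟩ := hpart
  obtain ⟨N, hcN, hNN₀, hkN⟩ :=
    ((hc ε hεpos).and ((eventually_ge_atTop N₀).and (eventually_gt_atTop k))).exists
  have hNpos : (0 : ℝ) < N := by exact_mod_cast (Nat.zero_le k).trans_lt hkN
  have hall : ∀ᶠ n in atTop, ∀ j ∈ Finset.range N, c j - ε / N < a n j :=
    (eventually_all_finset _).2 fun j _ => hlow j _ (sub_lt_self _ (div_pos hεpos hNpos))
  filter_upwards [hall, hs ε hεpos] with n hn hsn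
  have hterm : a n k - (c k - ε / N) ≤ ∑ j ∈ Finset.range N, (a n j - (c j - ε / N)) :=
    Finset.single_le_sum (f := fun j => a n j - (c j - ε / N))
      (fun j hj => sub_nonneg.2 (hn j hj).le) (Finset.mem_range.2 hkN)
  have hsum : ∑ j ∈ Finset.range N, (a n j - (c j - ε / N))
      = ∑ j ∈ Finset.range N, a n j - ∑ j ∈ Finset.range N, c j + ε := by
    simp only [Finset.sum_sub_distrib, Finset.sum_const, Finset.card_range, nsmul_eq_mul]
    field_simp
    ring
  have hle := hN₀ N hNN₀ n
  have hδ : 0 < ε / N := div_pos hεpos hNpos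
  linarith

/-- If the sums `s n` are eventually bounded above and the terms are bounded below uniformly in `n`,
then no term `a n k` tends to `+∞`. -/
lemma liminf_ne_top_of_sum_bounded (a : ℕ → ℕ → ℝ) (s : ℕ → ℝ) (L : ℝ) (M : ℕ → ℝ)
    (hM0 : ∀ j, 0 ≤ M j) (hbd : ∀ n j, -M j ≤ a n j)
    (hpart : ∃ N₀, ∀ N, N₀ ≤ N → ∀ n, ∑ j ∈ Finset.range N, a n j ≤ s n)
    (hs : ∀ ε > 0, ∀ᶠ n in atTop, s n < L + ε) (k : ℕ) :
    liminf (fun n => ((a n k : ℝ) : EReal)) atTop ≠ ⊤ := by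
  intro htop
  obtain ⟨N₀, hN₀⟩ := hpart
  obtain ⟨N, hNN₀, hkN⟩ := ((eventually_ge_atTop N₀).and (eventually_gt_atTop k)).exists
  have hbig : ∀ᶠ n in atTop,
      ((L + 1 + ∑ j ∈ Finset.range N, M j : ℝ) : EReal) < ((a n k : ℝ) : EReal) :=
    eventually_lt_of_lt_liminf (htop ▸ EReal.coe_lt_top _)
  obtain ⟨n, hn, hsn⟩ := (hbig.and (hs 1 one_pos)).exists
  have hn' := EReal.coe_lt_coe_iff.1 hn
  have hterm : a n k + M k ≤ ∑ j ∈ Finset.range N, (a n j + M j) :=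
    Finset.single_le_sum (f := fun j => a n j + M j)
      (fun j _ => by linarith [hbd n j]) (Finset.mem_range.2 hkN)
  rw [Finset.sum_add_distrib] at hterm
  linarith [hN₀ N hNN₀ n, hM0 k]

/-- A discrete analogue of Fatou's lemma, and its consequences.  Let `a n j` be a
doubly-indexed sequence of reals such that (F1) for each `n` the series
`∑_j a n j` converges, with sum `s n`, and (F2) `a n j ≥ -M j` where the `M j ≥ 0`
are almost all zero.  Then:
(A) if `limsup_n s n ≤ L` and `∑_j (liminf_n a n j) ≥ L` (the sum taken in
`(-∞, +∞]`), then `lim_n a n j` exists for every `j`;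
(B) if `limsup_n s n ≤ L` and there are reals `L' j` with `∑_j L' j` convergent
with sum `≥ L` and `liminf_n a n j ≥ L' j` for all `j`, then `lim_n a n j = L' j`
for every `j`. -/
theorem double_sum_lemma
    (a : ℕ → ℕ → ℝ) (s : ℕ → ℝ)
    (h1 : ∀ n, Tendsto (fun N => ∑ j ∈ Finset.range N, a n j) atTop (nhds (s n)))
    (M : ℕ → ℝ) (hM0 : ∀ j, 0 ≤ M j) (hMfin : {j : ℕ | M j ≠ 0}.Finite)
    (hbd : ∀ n j, -M j ≤ a n j) (L : ℝ) :
    ((limsup (fun n => ((s n : ℝ) : EReal)) atTop ≤ (L : EReal)) →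
      ((L : EReal) ≤
        liminf (fun N =>
          ∑ j ∈ Finset.range N, liminf (fun n => ((a n j : ℝ) : EReal)) atTop) atTop) →
      ∀ j, ∃ l : ℝ, Tendsto (fun n => a n j) atTop (nhds l)) ∧
    ((limsup (fun n => ((s n : ℝ) : EReal)) atTop ≤ (L : EReal)) →
      ∀ (L' : ℕ → ℝ) (T : ℝ),
        Tendsto (fun N => ∑ j ∈ Finset.range N, L' j) atTop (nhds T) → L ≤ T →
        (∀ j, ((L' j : ℝ) : EReal) ≤ liminf (fun n => ((a n j : ℝ) : EReal)) atTop) →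
        ∀ j, Tendsto (fun n => a n j) atTop (nhds (L' j))) := by
  have hpart := exists_partial_sum_le a s h1 M hMfin hbd
  have hs_of : limsup (fun n => ((s n : ℝ) : EReal)) atTop ≤ (L : EReal) →
      ∀ ε > 0, ∀ᶠ n in atTop, s n < L + ε := fun h ε hε =>
    (eventually_lt_of_limsup_lt (h.trans_lt (EReal.coe_lt_coe (lt_add_of_pos_right L hε)))).mono
      fun _ hn => EReal.coe_lt_coe_iff.1 hn
  have hlow_of : ∀ c : ℕ → ℝ,
      (∀ j, ((c j : ℝ) : EReal) ≤ liminf (fun n => ((a n j : ℝ) : EReal)) atTop) →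
      ∀ j, ∀ x < c j, ∀ᶠ n in atTop, x < a n j := fun c h j x hx =>
    (eventually_lt_of_lt_liminf ((EReal.coe_lt_coe hx).trans_le (h j))).mono
      fun _ hn => EReal.coe_lt_coe_iff.1 hn
  refine ⟨fun hlim hsum => ?_, fun hlim L' T hT hLT hL' => ?_⟩
  · have hs := hs_of hlim
    have hbot : ∀ j, liminf (fun n => ((a n j : ℝ) : EReal)) atTop ≠ ⊥ := fun j =>
      ((EReal.bot_lt_coe (-M j)).trans_le (le_liminf_of_le (by isBoundedDefault)
        (Eventually.of_forall fun n => EReal.coe_le_coe (hbd n j)))).ne'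
    have hcoe : ∀ j, (((liminf (fun n => ((a n j : ℝ) : EReal)) atTop).toReal : ℝ) : EReal)
        = liminf (fun n => ((a n j : ℝ) : EReal)) atTop := fun j =>
      EReal.coe_toReal (liminf_ne_top_of_sum_bounded a s L M hM0 hbd hpart hs j) (hbot j)
    generalize hc : (fun j => (liminf (fun n => ((a n j : ℝ) : EReal)) atTop).toReal) = c
    have hcj : ∀ j, liminf (fun n => ((a n j : ℝ) : EReal)) atTop = ((c j : ℝ) : EReal) :=
      fun j => by rw [← hcoe j, ← hc]
    simp only [hcj] at hsum
    have hcoe_sum : ∀ N, ((∑ j ∈ Finset.range N, c j : ℝ) : EReal)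
        = ∑ j ∈ Finset.range N, ((c j : ℝ) : EReal) := fun N =>
      map_sum (⟨⟨Real.toEReal, EReal.coe_zero⟩, EReal.coe_add⟩ : ℝ →+ EReal) _ _
    refine fun j => ⟨c j, tendsto_of_squeeze a s L c hpart hs
      (hlow_of c fun j => (hcj j).ge) (fun ε hε => ?_) j⟩
    have := eventually_lt_of_lt_liminf
      ((EReal.coe_lt_coe (sub_lt_self L hε)).trans_le hsum)
    filter_upwards [this] with N hN
    rw [← hcoe_sum] at hN
    exact EReal.coe_lt_coe_iff.1 hN
  · exact tendsto_of_squeeze a s L L' hpart (hs_of hlim) (hlow_of L' hL') fun ε hε =>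
      hT.eventually_const_lt (by linarith)
end

section
/- Let X be a nonempty set and let g : X × X → ℝ ∪ {+∞} be bounded below. For each integer n ≥ 2 define D_n := inf over all z₁, …, zₙ ∈ X of (1/(n(n−1)))·∑_{i≠j} g(z_i, z_j) (the sum over ordered pairs i ≠ j, the infimum taken in the extended reals, so D_n ∈ ℝ ∪ {+∞}). Then the sequence (D_n)_{n ≥ 2} is non-decreasing: D_n ≤ D_{n+1} for all n ≥ 2. -/
/-!
Deleting one point from an `(n+1)`-point configuration gives `n + 1` configurations of `n` points.
An ordered pair of distinct indices survives exactly `n - 1` of these deletions, so the energies of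
the sub-configurations add up to `(n - 1)` times the full energy `S`
(`sum_sum_succAbove`). Hence some sub-configuration has energy at most `(n - 1) / (n + 1) * S`, and
after normalization it has energy at most `S / ((n + 1) * n)`.

This averaging takes place in `ℝ`. If an off-diagonal value of `g` is `⊤`, then the lower bound on
`g` makes the right-hand energy `⊤` and there is nothing to prove; otherwise all off-diagonal values
are real.
-/

/-- Double counting: a pair of distinct indices avoids the deleted index `k` for exactly `n - 1`
of the `n + 1` choices of `k`. -/
lemma sum_sum_succAbove (n : ℕ) (f : Fin (n + 1) → Fin (n + 1) → ℝ) (hf : ∀ i, f i i = 0) :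
    ∑ k : Fin (n + 1), ∑ i : Fin n, ∑ j : Fin n, f (k.succAbove i) (k.succAbove j)
      = ((n : ℝ) - 1) * ∑ i, ∑ j, f i j := by
  have h : ∀ k : Fin (n + 1), ∑ i : Fin n, ∑ j : Fin n, f (k.succAbove i) (k.succAbove j)
      = (∑ i, ∑ j, f i j) - (∑ j, f k j) - ∑ i, f i k := by
    intro k
    have h1 := Fin.sum_univ_succAbove (fun i => ∑ j, f i j) k
    have h2 : ∀ i, ∑ j : Fin n, f i (k.succAbove j) = (∑ j, f i j) - f i k := fun i => by
      rw [Fin.sum_univ_succAbove (f i) k]; ring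
    have h3 := Fin.sum_univ_succAbove (fun i => f i k) k
    simp only [h2, Finset.sum_sub_distrib]
    simp only [hf] at h3
    linarith
  simp only [h, Finset.sum_sub_distrib]
  rw [Finset.sum_comm (f := fun k i => f i k)]
  simp
  ring

lemma exists_succAbove_energy_le (n : ℕ) (hn : 2 ≤ n) (f : Fin (n + 1) → Fin (n + 1) → ℝ)
    (hf : ∀ i, f i i = 0) :
    ∃ k : Fin (n + 1),
      ((n : ℝ) * ((n : ℝ) - 1))⁻¹ * ∑ i : Fin n, ∑ j : Fin n, f (k.succAbove i) (k.succAbove j)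
        ≤ ((n + 1 : ℝ) * ((n + 1 : ℝ) - 1))⁻¹ * ∑ i, ∑ j, f i j := by
  have hn' : (2 : ℝ) ≤ n := by exact_mod_cast hn
  have hn1 : (0 : ℝ) < (n : ℝ) - 1 := by linarith
  have hn0 : (0 : ℝ) < n := by linarith
  obtain ⟨k, -, hk⟩ := Finset.exists_le_of_sum_le (s := Finset.univ)
    (f := fun k : Fin (n + 1) =>
      ((n : ℝ) * ((n : ℝ) - 1))⁻¹ * ∑ i : Fin n, ∑ j : Fin n, f (k.succAbove i) (k.succAbove j))
    (g := fun _ => ((n + 1 : ℝ) * ((n + 1 : ℝ) - 1))⁻¹ * ∑ i, ∑ j, f i j)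
    Finset.univ_nonempty (by
      rw [← Finset.mul_sum, sum_sum_succAbove n f hf]
      apply le_of_eq
      simp
      field_simp)
  exact ⟨k, hk⟩

/-- Where the kernel is finite off the diagonal, the `EReal` energy is the real double sum of the
kernel set to `0` on the diagonal. -/
lemma sum_offDiag_eq_coe (m : ℕ) (h : Fin m × Fin m → EReal) (f : Fin m → Fin m → ℝ)
    (hf : ∀ i, f i i = 0) (hh : ∀ i j, i ≠ j → h (i, j) = (f i j : EReal)) :
    ∑ p ∈ Finset.univ.filter (fun p : Fin m × Fin m => p.1 ≠ p.2), h p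
      = ((∑ i, ∑ j, f i j : ℝ) : EReal) := by
  have hr : ∑ i, ∑ j, f i j
      = ∑ p ∈ Finset.univ.filter (fun p : Fin m × Fin m => p.1 ≠ p.2), f p.1 p.2 := by
    rw [← Fintype.sum_prod_type' f, Finset.sum_filter_of_ne]
    rintro ⟨i, j⟩ - hp hij
    obtain rfl : i = j := hij
    exact hp (hf i)
  let φ : ℝ →+ EReal := ⟨⟨Real.toEReal, EReal.coe_zero⟩, EReal.coe_add⟩
  rw [hr]
  refine Eq.trans ?_ (map_sum φ _ _).symm
  refine Finset.sum_congr rfl fun p hp => ?_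
  exact hh p.1 p.2 (Finset.mem_filter.1 hp).2

lemma sum_ne_bot_of_forall {ι : Type*} (s : Finset ι) (h : ι → EReal) (hh : ∀ i, h i ≠ ⊥) :
    ∑ i ∈ s, h i ≠ ⊥ := by
  classical
  induction s using Finset.induction_on with
  | empty => simp
  | insert a s ha ih =>
    rw [Finset.sum_insert ha]
    simp [EReal.add_eq_bot_iff, hh, ih]

/-- Let `g : X × X → ℝ ∪ {+∞}` be bounded below on a nonempty set `X`.  Then the
sequence `D_n = inf_{z₁,…,zₙ ∈ X} (1/(n(n-1)))·∑_{i≠j} g(z_i,z_j)` (sums over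
ordered pairs `i ≠ j`, infima in the extended reals) is non-decreasing for `n ≥ 2`. -/
theorem discrete_energy_monotone
    {X : Type*} [Nonempty X] (g : X × X → EReal)
    (M : ℝ) (hM : ∀ p : X × X, (M : EReal) ≤ g p) :
    ∀ n : ℕ, 2 ≤ n →
      (⨅ z : Fin n → X,
        (((((n : ℝ) * ((n : ℝ) - 1))⁻¹ : ℝ) : EReal) *
          ∑ p ∈ Finset.univ.filter (fun p : Fin n × Fin n => p.1 ≠ p.2),
            g (z p.1, z p.2))) ≤
      (⨅ z : Fin (n + 1) → X,
        (((((n + 1 : ℝ) * ((n + 1 : ℝ) - 1))⁻¹ : ℝ) : EReal) *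
          ∑ p ∈ Finset.univ.filter (fun p : Fin (n + 1) × Fin (n + 1) => p.1 ≠ p.2),
            g (z p.1, z p.2))) := by
  intro n hn
  have hbot : ∀ p, g p ≠ ⊥ := fun p hp => by simpa [hp] using hM p
  refine le_iInf fun z => ?_
  by_cases htop : ∃ i j, i ≠ j ∧ g (z i, z j) = ⊤
  · obtain ⟨i, j, hij, hg⟩ := htop
    have hsum : ∑ p ∈ Finset.univ.filter (fun p : Fin (n + 1) × Fin (n + 1) => p.1 ≠ p.2),
        g (z p.1, z p.2) = ⊤ := by
      rw [← Finset.add_sum_erase _ _ (Finset.mem_filter.2 ⟨Finset.mem_univ (i, j), hij⟩)]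
      simp only [hg]
      exact EReal.top_add_of_ne_bot (sum_ne_bot_of_forall _ _ fun _ => hbot _)
    rw [hsum, EReal.coe_mul_top_of_pos]
    · exact le_top
    · have hn0 : (0 : ℝ) < n := by exact_mod_cast (by omega : 0 < n)
      rw [add_sub_cancel_right]
      positivity
  · push Not at htop
    let f : Fin (n + 1) → Fin (n + 1) → ℝ := fun i j =>
      if i = j then 0 else (g (z i, z j)).toReal
    have hf : ∀ i, f i i = 0 := fun i => by simp [f]
    have hgf : ∀ i j, i ≠ j → g (z i, z j) = (f i j : EReal) := fun i j hij => by
      simp only [f, if_neg hij]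
      exact (EReal.coe_toReal (htop i j hij) (hbot _)).symm
    obtain ⟨k, hk⟩ := exists_succAbove_energy_le n hn f hf
    refine (iInf_le _ (fun i => z (k.succAbove i))).trans ?_
    rw [sum_offDiag_eq_coe (n + 1) (fun p => g (z p.1, z p.2)) f hf hgf,
      sum_offDiag_eq_coe n (fun p => g (z (k.succAbove p.1), z (k.succAbove p.2)))
        (fun i j => f (k.succAbove i) (k.succAbove j)) (fun i => hf _)
        (fun i j hij => hgf _ _ fun h => hij (Fin.succAbove_right_injective h))]
    exact_mod_cast hk
end

section
/- Let X be a nonempty compact metrizable topological space, and let g : X × X → ℝ ∪ {+∞} be lower semicontinuous and bounded below. For a Borel probability measure ν on X define I(ν) := ∬_{X×X} g(z,w) dν(z) dν(w) ∈ (−∞,+∞]. Suppose μ is a Borel probability measure on X such that I(μ) = 0 and I(ν) > 0 for every Borel probability measure ν ≠ μ on X (i.e., μ is the unique energy minimizer and its energy is 0). Let (S_n)_{n≥1} be a sequence of finite subsets of X with N_n := #S_n → ∞ and (1/(N_n(N_n − 1)))·∑_{z,w ∈ S_n, z ≠ w} g(z,w) → 0 as n → ∞. Then the uniform probability measures δ_n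 := (1/N_n)·∑_{z ∈ S_n} δ_z converge weakly to μ. -/
/-!
The space of Borel probability measures on `X` is compact, so it suffices that every limit point
`ν` of the uniform measures `δₙ` along an ultrafilter equals `μ`, and by uniqueness of the minimizer
this follows from `I(ν) ≤ 0`.

If `h ≤ g` is continuous, then `δₙ × δₙ → ν × ν` weakly, so `∬ h dν dν` is the limit of `∬ h dδₙ dδₙ`.
The off-diagonal part of the latter is at most the off-diagonal energy of `g`, which tends to `0`,
and the diagonal part is `O(1 / Nₙ)` since `h` is bounded. Hence `∬ h dν dν ≤ 0`
(`integral_prod_nonpos_of_tendsto`). As `g` is an increasing limit of continuous functions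
(`exists_monotone_continuous_tendsto_of_lsc`), `I(ν) ≤ 0`
(`eInt_nonpos_of_continuous_minorants`).
-/

open Filter MeasureTheory
open scoped ENNReal

theorem EReal.toENNReal'_eq (x : EReal) : x.toENNReal' = x.toENNReal := rfl

/-- On a compact metrizable space, a lower semicontinuous function bounded below is the pointwise
limit of an increasing sequence of continuous real functions. Urysohn's lemma exhibits it as the
supremum of its continuous minorants, second countability extracts a countable subfamily with the
same supremum, and the partial suprema of the latter form the sequence. -/
theorem exists_monotone_continuous_tendsto_of_lsc {Y : Type*} [TopologicalSpace Y] [CompactSpace Y]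
    [TopologicalSpace.MetrizableSpace Y] [Nonempty Y] (g : Y → EReal)
    (hg : LowerSemicontinuous g) (M : ℝ) (hM : ∀ y, (M : EReal) ≤ g y) :
    ∃ f : ℕ → C(Y, ℝ), Monotone f ∧ (∀ n y, (f n y : EReal) ≤ g y) ∧
      ∀ y, Tendsto (fun n => (f n y : EReal)) atTop (nhds (g y)) := by
  let _ := TopologicalSpace.metrizableSpaceMetric Y
  let F : Set (Y → EReal) :=
    {u | ∃ f : C(Y, ℝ), (∀ y, (f y : EReal) ≤ g y) ∧ u = fun y => (f y : EReal)}
  have hF : IsLUB F g := by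
    rw [isLUB_pi]
    intro y
    refine ⟨?_, fun b hb => ?_⟩
    · rintro _ ⟨_, ⟨f, hf, rfl⟩, rfl⟩
      exact hf y
    · have key : ∀ f : C(Y, ℝ), (∀ y, (f y : EReal) ≤ g y) → (f y : EReal) ≤ b := fun f hf =>
        hb ⟨_, ⟨f, hf, rfl⟩, rfl⟩
      refine EReal.ge_of_forall_gt_iff_ge.1 fun r hr => ?_
      rcases le_total r M with hrM | hMr
      · exact (EReal.coe_le_coe_iff.2 hrM).trans (key (ContinuousMap.const Y M) hM)
      · have hU : IsOpen {z | (r : EReal) < g z} := hg.isOpen_preimage r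
        obtain ⟨φ, h0, h1, h01⟩ := exists_continuous_zero_one_of_isClosed hU.isClosed_compl
          (isClosed_singleton (x := y)) (by simpa using hr)
        -- This minorant takes the value `r` at `y` and `M` outside the open set `{r < g}`.
        have := key (ContinuousMap.const Y M + (r - M) • φ) (fun z => by
          by_cases hz : (r : EReal) < g z
          · refine le_trans ?_ hz.le
            have := (h01 z).2
            have : M + (r - M) * φ z ≤ r := by nlinarith
            exact_mod_cast this
          · have := h0 (show z ∈ {z | (r : EReal) < g z}ᶜ from hz)
            simpa [this] using hM z)
        have h1y := h1 rfl
        simpa [h1y] using this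
  obtain ⟨F', hF'F, hc, hlub⟩ := exists_countable_lowerSemicontinuous_isLUB (𝓕 := F) (s := g)
    (by
      rintro _ ⟨f, -, rfl⟩
      exact (continuous_coe_real_ereal.comp f.continuous).lowerSemicontinuous) hF
  have hne : F'.Nonempty := by
    rw [Set.nonempty_iff_ne_empty]
    rintro rfl
    obtain ⟨y⟩ := ‹Nonempty Y›
    have h := (hlub.2 (show (fun _ => ⊥ : Y → EReal) ∈ upperBounds ∅ by simp)) y
    exact absurd ((hM y).trans h) (by simp)
  obtain ⟨u, rfl⟩ := hc.exists_eq_range hne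
  choose f hf hfu using fun n => hF'F (Set.mem_range_self n)
  have hle : ∀ n y, (partialSups f n y : EReal) ≤ g y := by
    intro n
    induction n with
    | zero => simpa using hf 0
    | succ n ih =>
      intro y
      rw [partialSups_add_one, ContinuousMap.sup_apply, EReal.coe_strictMono.monotone.map_max]
      exact max_le (ih y) (hf _ y)
  refine ⟨partialSups f, (partialSups f).monotone, hle, fun y => ?_⟩
  refine tendsto_atTop_isLUB
    (fun m n hmn => EReal.coe_le_coe_iff.2 ((partialSups f).monotone hmn y)) ⟨?_, fun b hb => ?_⟩
  · rintro _ ⟨n, rfl⟩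
    exact hle n y
  · refine ((isLUB_pi.1 hlub) y).2 ?_
    rintro _ ⟨_, ⟨n, rfl⟩, rfl⟩
    refine le_trans ?_ (hb ⟨n, rfl⟩)
    rw [hfu n]
    exact EReal.coe_le_coe_iff.2 (le_partialSups f n y)

/-- Monotone convergence for the positive parts and dominated convergence for the negative parts
pass the inequality from continuous minorants to `g`. -/
theorem eInt_nonpos_of_continuous_minorants {Y : Type*} [TopologicalSpace Y] [CompactSpace Y]
    [TopologicalSpace.MetrizableSpace Y] [Nonempty Y] [MeasurableSpace Y] [BorelSpace Y]
    (ρ : Measure Y) [IsFiniteMeasure ρ] (g : Y → EReal)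
    (hg : LowerSemicontinuous g) (M : ℝ) (hM : ∀ y, (M : EReal) ≤ g y)
    (h : ∀ f : C(Y, ℝ), (∀ y, (f y : EReal) ≤ g y) → ∫ y, f y ∂ρ ≤ 0) :
    eInt ρ g ≤ 0 := by
  obtain ⟨f, hmono, hle, hlim⟩ := exists_monotone_continuous_tendsto_of_lsc g hg M hM
  have hint : ∀ f : C(Y, ℝ), Integrable f ρ := fun f =>
    f.continuous.integrable_of_hasCompactSupport (HasCompactSupport.of_compactSpace f)
  have hmeas : ∀ f : C(Y, ℝ), Measurable f := fun f => f.continuous.measurable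
  have hn : ∀ n, ∫⁻ y, (f n y : EReal).toENNReal ∂ρ ≤ ∫⁻ y, (-(f n y : EReal)).toENNReal ∂ρ := by
    intro n
    have h1 := h (f n) (hle n)
    rw [integral_eq_lintegral_pos_part_sub_lintegral_neg_part (hint _), sub_nonpos,
      ENNReal.toReal_le_toReal (hint (f n)).lintegral_lt_top.ne
        (show ∫⁻ y, ENNReal.ofReal (-(f n) y) ∂ρ ≠ ⊤ from (hint (f n)).neg.lintegral_lt_top.ne)] at h1
    exact h1
  have hpos : Tendsto (fun n => ∫⁻ y, (f n y : EReal).toENNReal ∂ρ) atTop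
      (nhds (∫⁻ y, (g y).toENNReal ∂ρ)) := by
    refine lintegral_tendsto_of_tendsto_of_monotone
      (fun n => ((hmeas (f n)).ennreal_ofReal).aemeasurable)
      (ae_of_all _ fun y m n hmn => EReal.toENNReal_le_toENNReal
        (EReal.coe_le_coe_iff.2 (hmono hmn y)))
      (ae_of_all _ fun y => ?_)
    exact (EReal.continuous_toENNReal.tendsto _).comp (hlim y)
  have hneg : Tendsto (fun n => ∫⁻ y, (-(f n y : EReal)).toENNReal ∂ρ) atTop
      (nhds (∫⁻ y, (-(g y)).toENNReal ∂ρ)) := by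
    refine tendsto_lintegral_of_dominated_convergence
      (fun y => (-(f 0 y : EReal)).toENNReal) (fun n => (hmeas (f n)).neg.ennreal_ofReal)
      (fun n => ae_of_all _ fun y => EReal.toENNReal_le_toENNReal ?_)
      (hint (f 0)).neg.lintegral_lt_top.ne (ae_of_all _ fun y => ?_)
    · exact EReal.neg_le_neg_iff.2 (EReal.coe_le_coe_iff.2 (hmono (Nat.zero_le n) y))
    · exact (EReal.continuous_toENNReal.tendsto _).comp ((continuous_neg.tendsto _).comp (hlim y))
  have := le_of_tendsto_of_tendsto' hpos hneg hn
  simp only [eInt, EReal.toENNReal'_eq]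
  exact EReal.sub_nonpos.2 (EReal.coe_ennreal_le_coe_ennreal_iff.2 this)

theorem integral_unifMeasure {X : Type*} [TopologicalSpace X] [T1Space X] [MeasurableSpace X]
    [BorelSpace X] (S : Finset X) (f : X → ℝ) :
    ∫ x, f x ∂(unifMeasure S) = (S.card : ℝ)⁻¹ * ∑ z ∈ S, f z := by
  rw [unifMeasure, integral_smul_measure, integral_finsetSum_measure
    fun z _ => integrable_dirac (by simp)]
  simp

theorem isProbabilityMeasure_unifMeasure {X : Type*} [MeasurableSpace X] {S : Finset X}
    (hS : S.Nonempty) : IsProbabilityMeasure (unifMeasure S) := by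
  refine ⟨?_⟩
  simp only [unifMeasure, Measure.smul_apply, Measure.finsetSum_apply, measure_univ,
    Finset.sum_const, smul_eq_mul, nsmul_eq_mul, mul_one]
  exact ENNReal.inv_mul_cancel (by simpa using hS.ne_empty) (by simp)

/-- The double integral against `unifMeasure S` exceeds a nonnegative bound on the off-diagonal
energy by at most the diagonal contribution, which is `O(1 / #S)` for a bounded kernel. -/
theorem integral_prod_unifMeasure_le {X : Type*} [TopologicalSpace X] [CompactSpace X]
    [TopologicalSpace.MetrizableSpace X] [MeasurableSpace X] [BorelSpace X] [DecidableEq X]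
    (S : Finset X) (hS : 2 ≤ S.card) (h : C(X × X, ℝ)) (ε : ℝ) (hε : 0 ≤ ε)
    (hE : ((S.card : ℝ) * ((S.card : ℝ) - 1))⁻¹ * ∑ z ∈ S, ∑ w ∈ S.erase z, h (z, w) ≤ ε) :
    ∫ p, h p ∂((unifMeasure S).prod (unifMeasure S)) ≤ ε + ‖h‖ * (S.card : ℝ)⁻¹ := by
  have := isProbabilityMeasure_unifMeasure (S := S) (Finset.card_pos.1 (by omega))
  rw [integral_prod _ (h.continuous.integrable_of_hasCompactSupport
    (HasCompactSupport.of_compactSpace h))]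
  simp only [integral_unifMeasure]
  have hsplit : ∑ z ∈ S, ∑ w ∈ S, h (z, w) =
      ∑ z ∈ S, ∑ w ∈ S.erase z, h (z, w) + ∑ z ∈ S, h (z, z) := by
    rw [← Finset.sum_add_distrib]
    exact Finset.sum_congr rfl fun z hz => (Finset.sum_erase_add S (fun w => h (z, w)) hz).symm
  have hdiag : ∑ z ∈ S, h (z, z) ≤ S.card * ‖h‖ := by
    rw [← nsmul_eq_mul]
    exact Finset.sum_le_card_nsmul _ _ _ fun z _ =>
      (le_abs_self _).trans (h.norm_coe_le_norm (z, z))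
  rw [← Finset.mul_sum, hsplit]
  have hN : (2 : ℝ) ≤ S.card := by exact_mod_cast hS
  generalize (∑ z ∈ S, ∑ w ∈ S.erase z, h (z, w)) = A at *
  generalize (∑ z ∈ S, h (z, z)) = D at *
  generalize (S.card : ℝ) = N at *
  have hN0 : 0 < N := by linarith
  rw [inv_mul_le_iff₀ (by nlinarith)] at hE
  rw [← mul_assoc, ← mul_inv, inv_mul_le_iff₀ (by positivity)]
  have : N * N * (ε + ‖h‖ * N⁻¹) = N * N * ε + N * ‖h‖ := by field_simp
  rw [this]
  nlinarith [mul_nonneg hN0.le hε]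

/-- A limit point of the `unifMeasure (S n)` has nonpositive integral against every continuous
kernel below `g`: for such a kernel the off-diagonal energies are bounded by those of `g`. -/
theorem integral_prod_nonpos_of_tendsto {X : Type*} [TopologicalSpace X] [CompactSpace X]
    [TopologicalSpace.MetrizableSpace X] [MeasurableSpace X] [BorelSpace X] [DecidableEq X]
    (g : X × X → EReal) (S : ℕ → Finset X)
    (hcard : Tendsto (fun n => (S n).card) atTop atTop)
    (henergy : Tendsto (fun n =>
        (((((S n).card : ℝ) * (((S n).card : ℝ) - 1))⁻¹ : ℝ) : EReal) *
          ∑ z ∈ S n, ∑ w ∈ (S n).erase z, g (z, w))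
      atTop (nhds (0 : EReal)))
    (P : ℕ → ProbabilityMeasure X) (hP : ∀ᶠ n in atTop, (P n : Measure X) = unifMeasure (S n))
    (l : Filter ℕ) [l.NeBot] (hl : l ≤ atTop) (ν : ProbabilityMeasure X)
    (hν : Tendsto P l (nhds ν)) (h : C(X × X, ℝ)) (hh : ∀ p, (h p : EReal) ≤ g p) :
    ∫ p, h p ∂((ν : Measure X).prod (ν : Measure X)) ≤ 0 := by
  have hprod : Tendsto (fun n => (P n).prod (P n)) l (nhds (ν.prod ν)) :=
    (ProbabilityMeasure.continuous_prod.tendsto (ν, ν)).comp (hν.prodMk_nhds hν)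
  have hlim := ProbabilityMeasure.tendsto_iff_forall_integral_tendsto.1 hprod
    (BoundedContinuousFunction.mkOfCompact h)
  -- For `n` large along `l`, the double integral against `P n` is at most `ε + ‖h‖ / #(S n)`.
  refine le_of_forall_pos_le_add fun ε hε => ?_
  have hcard' : Tendsto (fun n => ε + ‖h‖ * ((S n).card : ℝ)⁻¹) l (nhds (ε + ‖h‖ * 0)) :=
    tendsto_const_nhds.add (tendsto_const_nhds.mul
      (tendsto_inv_atTop_zero.comp (tendsto_natCast_atTop_atTop.comp (hcard.mono_left hl))))
  rw [mul_zero, add_comm] at hcard'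
  refine le_of_tendsto_of_tendsto hlim hcard' ?_
  have hsmall := henergy.eventually (gt_mem_nhds (show (0 : EReal) < (ε : EReal) by
    exact_mod_cast hε))
  filter_upwards [hl hP, hl (hcard.eventually_ge_atTop 2), hl hsmall] with n hPn hn hEn
  simp only [ProbabilityMeasure.toMeasure_prod, hPn, BoundedContinuousFunction.mkOfCompact_apply]
  refine integral_prod_unifMeasure_le (S n) hn h ε hε.le ?_
  have hN : (2 : ℝ) ≤ (S n).card := by exact_mod_cast hn
  rw [← EReal.coe_le_coe_iff, EReal.coe_mul]
  refine le_trans (mul_le_mul_of_nonneg_left ?_ ?_) hEn.le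
  · have hsum (s : Finset X) (u : X → ℝ) : ((∑ z ∈ s, u z : ℝ) : EReal) = ∑ z ∈ s, (u z : EReal) :=
      map_sum (AddMonoidHom.mk ⟨Real.toEReal, EReal.coe_zero⟩ EReal.coe_add) u s
    simp only [hsum]
    exact Finset.sum_le_sum fun z _ => Finset.sum_le_sum fun w _ => hh (z, w)
  · exact EReal.coe_nonneg.2 (inv_nonneg.2 (by nlinarith))

/-- Pseudo-equidistribution implies equidistribution.  Let `g : X × X → ℝ ∪ {+∞}`
be lower semicontinuous and bounded below on a nonempty compact metrizable space,
and let `μ` be a Borel probability measure with `I(μ) = 0` and `I(ν) > 0` for every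
Borel probability measure `ν ≠ μ`, where `I(ν) = ∬ g dν dν`.  If `Sₙ` are finite
subsets with `Nₙ = #Sₙ → ∞` and
`(1/(Nₙ(Nₙ-1)))·∑_{z ≠ w ∈ Sₙ} g(z,w) → 0`, then the uniform probability measures
on the `Sₙ` converge weakly to `μ`. -/
theorem pseudo_equidistribution_implies_equidistribution
    {X : Type*} [TopologicalSpace X] [CompactSpace X]
    [TopologicalSpace.MetrizableSpace X] [Nonempty X]
    [MeasurableSpace X] [BorelSpace X] [DecidableEq X]
    (g : X × X → EReal) (hlsc : LowerSemicontinuous g)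
    (M : ℝ) (hM : ∀ p : X × X, (M : EReal) ≤ g p)
    (μ : Measure X) (hμ : IsProbabilityMeasure μ)
    (hzero : eInt (μ.prod μ) g = 0)
    (hpos : ∀ ν : Measure X, IsProbabilityMeasure ν → ν ≠ μ →
      (0 : EReal) < eInt (ν.prod ν) g)
    (S : ℕ → Finset X)
    (hcard : Tendsto (fun n => (S n).card) atTop atTop)
    (henergy : Tendsto (fun n =>
        (((((S n).card : ℝ) * (((S n).card : ℝ) - 1))⁻¹ : ℝ) : EReal) *
          ∑ z ∈ S n, ∑ w ∈ (S n).erase z, g (z, w))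
      atTop (nhds (0 : EReal))) :
    ∀ f : C(X, ℝ),
      Tendsto (fun n => ∫ x, f x ∂(unifMeasure (S n))) atTop (nhds (∫ x, f x ∂μ)) := by
  classical
  let P : ℕ → ProbabilityMeasure X := fun n =>
    if h : (S n).Nonempty then ⟨unifMeasure (S n), isProbabilityMeasure_unifMeasure h⟩ else ⟨μ, hμ⟩
  have hP : ∀ᶠ n in atTop, (P n : Measure X) = unifMeasure (S n) := by
    filter_upwards [hcard.eventually_ge_atTop 1] with n hn
    have hne : (S n).Nonempty := Finset.card_pos.1 hn
    simp [P, hne]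
  have hlim : Tendsto P atTop (nhds ⟨μ, hμ⟩) := by
    refine tendsto_nhds_of_unique_mapClusterPt fun ν hν => ?_
    obtain ⟨U, hU, hUν⟩ := mapClusterPt_iff_ultrafilter.1 hν
    by_contra hne
    -- A limit point other than `μ` would have both positive and nonpositive energy.
    refine (hpos ν ν.2 fun h => hne (Subtype.ext h)).not_ge ?_
    exact eInt_nonpos_of_continuous_minorants _ g hlsc M hM
      (integral_prod_nonpos_of_tendsto g S hcard henergy P hP U hU ν hUν)
  intro f
  refine ((ProbabilityMeasure.tendsto_iff_forall_integral_tendsto.1 hlim)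
    (BoundedContinuousFunction.mkOfCompact f)).congr' ?_
  filter_upwards [hP] with n hn
  simp [hn]
end
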